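/- Let α ∈ (0,π), γ ∈ [0,π/2], and B = (sin γ·cos(α/2), sin γ·sin(α/2), cos γ). Then λ(B;W_α) ≤ α·( 1/√3 + (√3/2)·sin²γ ). -/

import Mathlib

open Real MeasureTheory Set Filter

noncomputable section

namespace MagWedge

/-- The infinite sector `S_α := {(x₁,x₂) : |x₂| ≤ x₁·tan(α/2)}`. -/
def sector (α : ℝ) : Set (ℝ × ℝ) :=
  {x | |x.2| ≤ x.1 * Real.tan (α / 2)}

/-- The infinite wedge `W_α := S_α × ℝ` (coordinates `(x₁, x₂, x₃)`). -/
def wedge (α : ℝ) : Set (ℝ × ℝ × ℝ) :=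
  {x | |x.2.1| ≤ x.1 * Real.tan (α / 2)}

/-- The upper half-plane `Hp^up := {x₂ < x₁·tan(α/2)}`. -/
def hpUp (α : ℝ) : Set (ℝ × ℝ) :=
  {x | x.2 < x.1 * Real.tan (α / 2)}

/-- The lower half-plane `Hp^low := {x₂ > −x₁·tan(α/2)}`. -/
def hpLow (α : ℝ) : Set (ℝ × ℝ) :=
  {x | -(x.1 * Real.tan (α / 2)) < x.2}

/-- The magnetic/electric energy of `u` on a planar domain `Ω`, for magnetic field
`(b₁,b₂,b₃)` (gauge `A̲ = (−x₂ b₃, 0)`) and Fourier parameter `τ`. -/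
def energy2D (Ω : Set (ℝ × ℝ)) (b1 b2 b3 τ : ℝ) (u : ℝ × ℝ → ℂ) : ℝ :=
  ∫ x in Ω,
    ‖(-Complex.I) * fderiv ℝ u x (1, 0) + ((x.2 * b3 : ℝ) : ℂ) * u x‖ ^ 2
      + ‖fderiv ℝ u x (0, 1)‖ ^ 2
      + (x.1 * b2 - x.2 * b1 - τ) ^ 2 * ‖u x‖ ^ 2

/-- The squared `L²`-norm of `u` on a planar domain `Ω`. -/
def norm2D (Ω : Set (ℝ × ℝ)) (u : ℝ × ℝ → ℂ) : ℝ := ∫ x in Ω, ‖u x‖ ^ 2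

/-- The bottom of the spectrum of the Neumann realization of
`(−i∇−A̲)² + (x₁b₂−x₂b₁−τ)²` on `Ω`, via the Rayleigh quotient. -/
def specInf2D (Ω : Set (ℝ × ℝ)) (b1 b2 b3 τ : ℝ) : ℝ :=
  sInf { r : ℝ | ∃ u : ℝ × ℝ → ℂ, ContDiff ℝ (⊤ : ℕ∞) u ∧ HasCompactSupport u ∧
    0 < norm2D Ω u ∧ r = energy2D Ω b1 b2 b3 τ u / norm2D Ω u }

/-- The band function `s(B;α,τ)` on the sector `S_α`. -/
def bandFn (α b1 b2 b3 τ : ℝ) : ℝ := specInf2D (sector α) b1 b2 b3 τ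

/-- `Σ(B;α,τ,R)` : the Rayleigh quotient infimum over functions supported outside the
(closed Euclidean) ball of radius `R` centered at the origin. -/
def SigmaR (α b1 b2 b3 τ R : ℝ) : ℝ :=
  sInf { r : ℝ | ∃ u : ℝ × ℝ → ℂ, ContDiff ℝ (⊤ : ℕ∞) u ∧ HasCompactSupport u ∧
    (tsupport u ⊆ {x : ℝ × ℝ | R ^ 2 < x.1 ^ 2 + x.2 ^ 2}) ∧
    0 < norm2D (sector α) u ∧
    r = energy2D (sector α) b1 b2 b3 τ u / norm2D (sector α) u }

/-- The bottom of the essential spectrum via Persson's characterization: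
`s_ess(B;α,τ) = sup_{R>0} Σ(B;α,τ,R)`. -/
def sEss (α b1 b2 b3 τ : ℝ) : ℝ :=
  sSup { r : ℝ | ∃ R > (0 : ℝ), r = SigmaR α b1 b2 b3 τ R }

/-- The 3D magnetic energy on a domain `Ω ⊆ ℝ³` for the constant field `(b₁,b₂,b₃)`,
in the gauge `A = (−x₂b₃, 0, x₂b₁ − x₁b₂)`. -/
def energy3D (Ω : Set (ℝ × ℝ × ℝ)) (b1 b2 b3 : ℝ) (u : ℝ × ℝ × ℝ → ℂ) : ℝ :=
  ∫ x in Ω,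
    ‖(-Complex.I) * fderiv ℝ u x (1, 0, 0) + ((x.2.1 * b3 : ℝ) : ℂ) * u x‖ ^ 2
      + ‖fderiv ℝ u x (0, 1, 0)‖ ^ 2
      + ‖(-Complex.I) * fderiv ℝ u x (0, 0, 1) - ((x.2.1 * b1 : ℝ) : ℂ) * u x
          + ((x.1 * b2 : ℝ) : ℂ) * u x‖ ^ 2

/-- The squared `L²`-norm of `u` on a domain `Ω ⊆ ℝ³`. -/
def norm3D (Ω : Set (ℝ × ℝ × ℝ)) (u : ℝ × ℝ × ℝ → ℂ) : ℝ := ∫ x in Ω, ‖u x‖ ^ 2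

/-- `λ(B;W_α)` : the bottom of the spectrum of the Neumann magnetic Laplacian on the
wedge `W_α` with constant magnetic field `B = (b₁,b₂,b₃)`. -/
def lambdaWedge (α b1 b2 b3 : ℝ) : ℝ :=
  sInf { r : ℝ | ∃ u : ℝ × ℝ × ℝ → ℂ, ContDiff ℝ (⊤ : ℕ∞) u ∧ HasCompactSupport u ∧
    0 < norm3D (wedge α) u ∧ r = energy3D (wedge α) b1 b2 b3 u / norm3D (wedge α) u }

/-- The de Gennes function `μ₁(ξ)`: bottom of the spectrum of the Neumann realization of
`−d²/dt² + (t−ξ)²` on the half-line. -/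
def deGennes (ξ : ℝ) : ℝ :=
  sInf { r : ℝ | ∃ u : ℝ → ℂ, ContDiff ℝ (⊤ : ℕ∞) u ∧ HasCompactSupport u ∧
    (0 < ∫ t in Ioi (0 : ℝ), ‖u t‖ ^ 2) ∧
    r = (∫ t in Ioi (0 : ℝ), ‖deriv u t‖ ^ 2 + (t - ξ) ^ 2 * ‖u t‖ ^ 2) /
        (∫ t in Ioi (0 : ℝ), ‖u t‖ ^ 2) }

/-- `Θ₀ := inf_ξ μ₁(ξ)`. -/
def Theta0 : ℝ := ⨅ ξ : ℝ, deGennes ξ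

/-- The half-space `{(s,t,z) : t > 0}` in ℝ³. -/
def halfSpace3 : Set (ℝ × ℝ × ℝ) := {x | 0 < x.2.1}

/-- `σ(θ)` : the bottom of the spectrum of the Neumann magnetic Laplacian on the half-space
with a unit magnetic field making angle `θ` with the boundary. -/
def sigmaHS (θ : ℝ) : ℝ :=
  sInf { r : ℝ | ∃ u : ℝ × ℝ × ℝ → ℂ, ContDiff ℝ (⊤ : ℕ∞) u ∧ HasCompactSupport u ∧
    (0 < ∫ x in halfSpace3, ‖u x‖ ^ 2) ∧
    r = (∫ x in halfSpace3,
          ‖fderiv ℝ u x (1, 0, 0)‖ ^ 2 + ‖fderiv ℝ u x (0, 1, 0)‖ ^ 2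
            + ‖(-Complex.I) * fderiv ℝ u x (0, 0, 1)
                - ((x.2.1 * Real.cos θ : ℝ) : ℂ) * u x
                + ((x.1 * Real.sin θ : ℝ) : ℂ) * u x‖ ^ 2) /
        (∫ x in halfSpace3, ‖u x‖ ^ 2) }

/-- `μ(α)` : the bottom of the spectrum of the magnetic Neumann Laplacian on the sector
`S_α` with unit constant (scalar) magnetic field. -/
def muSector (α : ℝ) : ℝ :=
  sInf { r : ℝ | ∃ u : ℝ × ℝ → ℂ, ContDiff ℝ (⊤ : ℕ∞) u ∧ HasCompactSupport u ∧
    0 < norm2D (sector α) u ∧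
    r = (∫ x in sector α,
          ‖(-Complex.I) * fderiv ℝ u x (1, 0) + (x.2 : ℂ) * u x‖ ^ 2
            + ‖fderiv ℝ u x (0, 1)‖ ^ 2) / norm2D (sector α) u }

end MagWedge

/-!
Since the field is invariant along the edge, a function `u(x₁,x₂) e^{-iτx₃} g(x₃)` with slowly
varying envelope `g` has almost the same Rayleigh quotient on the wedge as `u` has for
the fiber operator on the sector at Fourier parameter `τ`. Hence `λ(B;W_α)` is at most the Rayleigh
quotient at `τ = 0` of any smooth function of finite energy on the sector, the passage from compact
support being made by a cutoff. It is tested on the complex Gaussians `e^{-c(x₁²+x₂²) + i a x₁x₂}`,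
whose energy on the sector is computed in polar coordinates. The optimal `a` makes the contribution
of the field of order `α³`, because `α² - sin² α` is of order `α⁴` and, the transverse field being
tangent to a face of the wedge, `sin² γ` is multiplied by `α - sin α cos α`. Taking `c` proportional
to `α` then gives a bound linear in `α`.
-/

namespace MagWedge

open scoped Topology

lemma tendsto_inv_smul_atTop {E : Type*} [AddCommMonoid E] [Module ℝ E] [TopologicalSpace E]
    [ContinuousSMul ℝ E] (x : E) : Tendsto (fun R : ℝ => R⁻¹ • x) atTop (𝓝 0) := by
  simpa only [zero_smul] using (tendsto_inv_atTop_zero (𝕜 := ℝ)).smul_const x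

section Cutoff

variable {E : Type*} [NormedAddCommGroup E] [NormedSpace ℝ E] [FiniteDimensional ℝ E]

variable (E) in
/-- A smooth bump on `E` equal to `1` on the unit ball and supported in the ball of radius `2`. -/
def unitBump : ContDiffBump (0 : E) := ⟨1, 2, one_pos, one_lt_two⟩

/-- The cutoff at scale `R`. It is a dilation of `unitBump`, rather than a `ContDiffBump` of
radii `R` and `2R`, so that its derivative is `O(R⁻¹)` with an explicit scaling law. -/
def cutoff (R : ℝ) (x : E) : ℝ := unitBump E (R⁻¹ • x)

lemma contDiff_cutoff (R : ℝ) : ContDiff ℝ (⊤ : ℕ∞) (cutoff R : E → ℝ) :=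
  (unitBump E).contDiff.comp (contDiff_const_smul R⁻¹)

lemma hasCompactSupport_cutoff {R : ℝ} (hR : R ≠ 0) : HasCompactSupport (cutoff R : E → ℝ) :=
  (unitBump E).hasCompactSupport.comp_smul (inv_ne_zero hR)

lemma abs_cutoff_le_one (R : ℝ) (x : E) : |cutoff R x| ≤ 1 :=
  abs_le.2 ⟨neg_one_lt_zero.le.trans (unitBump E).nonneg, (unitBump E).le_one⟩

lemma fderiv_cutoff (R : ℝ) (x : E) :
    fderiv ℝ (cutoff R) x = R⁻¹ • fderiv ℝ (unitBump E) (R⁻¹ • x) :=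
  fderiv_comp_smul R⁻¹

lemma continuous_fderiv_unitBump : Continuous (fderiv ℝ (unitBump E)) :=
  (unitBump E).contDiff.continuous_fderiv one_ne_zero

lemma exists_norm_fderiv_cutoff_le :
    ∃ C : ℝ, ∀ R ≥ (1 : ℝ), ∀ x : E, ‖fderiv ℝ (cutoff R) x‖ ≤ C := by
  obtain ⟨C, hC⟩ := (continuous_fderiv_unitBump (E := E)).bounded_above_of_compact_support
    ((unitBump E).hasCompactSupport.fderiv ℝ)
  refine ⟨C, fun R hR x => ?_⟩
  rw [fderiv_cutoff, norm_smul, norm_inv]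
  exact (mul_le_of_le_one_left (norm_nonneg _)
    (inv_le_one_of_one_le₀ (hR.trans (le_abs_self R)))).trans (hC _)

lemma tendsto_cutoff (x : E) : Tendsto (fun R => cutoff R x) atTop (𝓝 1) := by
  have h_one : (unitBump E) 0 = 1 :=
    (unitBump E).one_of_mem_closedBall (Metric.mem_closedBall_self zero_le_one)
  rw [← h_one]
  exact ((unitBump E).continuous.tendsto 0).comp (tendsto_inv_smul_atTop x)

lemma tendsto_fderiv_cutoff (x : E) : Tendsto (fun R => fderiv ℝ (cutoff R) x) atTop (𝓝 0) := by
  simp only [fderiv_cutoff]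
  simpa only [zero_smul, Function.comp_def] using tendsto_inv_atTop_zero.smul
    ((continuous_fderiv_unitBump.tendsto 0).comp (tendsto_inv_smul_atTop x))

end Cutoff

lemma integral_cutoff_sq {R : ℝ} (hR : 0 < R) :
    ∫ t : ℝ, cutoff R t ^ 2 = R * ∫ t, unitBump ℝ t ^ 2 := by
  have h := Measure.integral_comp_inv_mul_left (fun t => unitBump ℝ t ^ 2) R
  rwa [abs_of_pos hR] at h

lemma integral_deriv_cutoff_sq {R : ℝ} (hR : 0 < R) :
    ∫ t : ℝ, deriv (cutoff R) t ^ 2 = R⁻¹ * ∫ t, deriv (unitBump ℝ) t ^ 2 := by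
  have h_deriv (t : ℝ) : deriv (cutoff R) t = R⁻¹ * deriv (unitBump ℝ) (R⁻¹ * t) :=
    deriv_comp_mul_left R⁻¹ (unitBump ℝ) t
  simp only [h_deriv, mul_pow, integral_const_mul]
  rw [Measure.integral_comp_inv_mul_left (fun t => deriv (unitBump ℝ) t ^ 2), abs_of_pos hR,
    smul_eq_mul]
  field_simp

lemma integral_unitBump_sq_pos : 0 < ∫ t, unitBump ℝ t ^ 2 := by
  refine ((unitBump ℝ).continuous.pow 2).integral_pos_of_hasCompactSupport_nonneg_nonzero
    ((unitBump ℝ).hasCompactSupport.comp_left (g := (· ^ 2)) (zero_pow two_ne_zero))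
    (fun t => sq_nonneg _) (x := 0) ?_
  exact pow_ne_zero 2 ((unitBump ℝ).pos_of_mem_ball (Metric.mem_ball_self two_pos)).ne'

/-- The bottom of the spectrum of `-d²/dt²` on the line is `0`. -/
lemma exists_integral_deriv_sq_le {ε : ℝ} (hε : 0 < ε) :
    ∃ g : ℝ → ℝ, ContDiff ℝ (⊤ : ℕ∞) g ∧ HasCompactSupport g ∧
      0 < ∫ t, g t ^ 2 ∧ ∫ t, deriv g t ^ 2 ≤ ε * ∫ t, g t ^ 2 := by
  set A := ∫ t, unitBump ℝ t ^ 2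
  set B := ∫ t, deriv (unitBump ℝ) t ^ 2
  have hA : 0 < A := integral_unitBump_sq_pos
  have hB : 0 ≤ B := integral_nonneg fun t => sq_nonneg _
  set R := 1 + B / (ε * A)
  have hR : 1 ≤ R := le_add_of_nonneg_right (div_nonneg hB (mul_pos hε hA).le)
  have hR_pos : 0 < R := one_pos.trans_le hR
  refine ⟨cutoff R, contDiff_cutoff R, hasCompactSupport_cutoff hR_pos.ne', ?_, ?_⟩
  · rw [integral_cutoff_sq hR_pos]
    positivity
  · have hBR : B ≤ R * (ε * A) :=
      (div_le_iff₀ (by positivity)).1 (le_add_of_nonneg_left zero_le_one)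
    rw [integral_cutoff_sq hR_pos, integral_deriv_cutoff_sq hR_pos, inv_mul_le_iff₀ hR_pos]
    calc B ≤ R * (ε * A) := hBR
      _ ≤ R * (R * (ε * A)) := le_mul_of_one_le_left (by positivity) hR
      _ = R * (ε * (R * A)) := by ring

/-- The integrand of `energy2D`, needed to speak of functions of finite energy. -/
def energyDensity2D (b1 b2 b3 τ : ℝ) (u : ℝ × ℝ → ℂ) (x : ℝ × ℝ) : ℝ :=
  ‖(-Complex.I) * fderiv ℝ u x (1, 0) + ((x.2 * b3 : ℝ) : ℂ) * u x‖ ^ 2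
    + ‖fderiv ℝ u x (0, 1)‖ ^ 2
    + (x.1 * b2 - x.2 * b1 - τ) ^ 2 * ‖u x‖ ^ 2

lemma energy2D_eq_setIntegral (Ω : Set (ℝ × ℝ)) (b1 b2 b3 τ : ℝ) (u : ℝ × ℝ → ℂ) :
    energy2D Ω b1 b2 b3 τ u = ∫ x in Ω, energyDensity2D b1 b2 b3 τ u x :=
  rfl

section PlanarEnergy

variable {b1 b2 b3 τ : ℝ} {u : ℝ × ℝ → ℂ}

lemma energyDensity2D_nonneg (x : ℝ × ℝ) : 0 ≤ energyDensity2D b1 b2 b3 τ u x := by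
  unfold energyDensity2D
  positivity

lemma continuous_energyDensity2D (hu : ContDiff ℝ 1 u) :
    Continuous (energyDensity2D b1 b2 b3 τ u) := by
  have : Continuous u := hu.continuous
  have : Continuous (fderiv ℝ u) := hu.continuous_fderiv one_ne_zero
  unfold energyDensity2D
  fun_prop

lemma hasCompactSupport_energyDensity2D (hu : HasCompactSupport u) :
    HasCompactSupport (energyDensity2D b1 b2 b3 τ u) := by
  refine hu.mono' fun x hx => ?_
  contrapose! hx
  simp [energyDensity2D, fderiv_of_notMem_tsupport ℝ hx, image_eq_zero_of_notMem_tsupport hx]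

lemma sq_norm_smul_add_smul_le {F : Type*} [SeminormedAddCommGroup F] [NormedSpace ℝ F]
    {s t C : ℝ} (hs : |s| ≤ 1) (ht : |t| ≤ C) (z w : F) :
    ‖s • z + t • w‖ ^ 2 ≤ 2 * ‖z‖ ^ 2 + 2 * C ^ 2 * ‖w‖ ^ 2 := by
  have h_norm : ‖s • z + t • w‖ ≤ ‖z‖ + C * ‖w‖ :=
    calc ‖s • z + t • w‖ ≤ |s| * ‖z‖ + |t| * ‖w‖ := by
          simpa only [norm_smul, Real.norm_eq_abs] using norm_add_le (s • z) (t • w)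
      _ ≤ ‖z‖ + C * ‖w‖ := by
          gcongr
          exact mul_le_of_le_one_left (norm_nonneg z) hs
  calc ‖s • z + t • w‖ ^ 2 ≤ (‖z‖ + C * ‖w‖) ^ 2 := by gcongr
    _ ≤ 2 * (‖z‖ ^ 2 + (C * ‖w‖) ^ 2) := add_sq_le
    _ = 2 * ‖z‖ ^ 2 + 2 * C ^ 2 * ‖w‖ ^ 2 := by ring

lemma fderiv_fun_smul_apply {E F : Type*} [NormedAddCommGroup E] [NormedSpace ℝ E]
    [NormedAddCommGroup F] [NormedSpace ℝ F] {f : E → ℝ} {g : E → F} {x : E}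
    (hf : DifferentiableAt ℝ f x) (hg : DifferentiableAt ℝ g x) (v : E) :
    fderiv ℝ (fun y => f y • g y) x v = f x • fderiv ℝ g x v + fderiv ℝ f x v • g x := by
  rw [fderiv_fun_smul hf hg]
  rfl

lemma energyDensity2D_smul_le {χ : ℝ × ℝ → ℝ} {C : ℝ} {x : ℝ × ℝ}
    (hχ : DifferentiableAt ℝ χ x) (hu : DifferentiableAt ℝ u x)
    (hχ_le : |χ x| ≤ 1) (hχ'_le : ‖fderiv ℝ χ x‖ ≤ C) :
    energyDensity2D b1 b2 b3 τ (fun y => χ y • u y) x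
      ≤ 2 * energyDensity2D b1 b2 b3 τ u x + 4 * C ^ 2 * ‖u x‖ ^ 2 := by
  have partial_le (v : ℝ × ℝ) (hv : ‖v‖ ≤ 1) : |fderiv ℝ χ x v| ≤ C :=
    ((fderiv ℝ χ x).le_opNorm_of_le hv).trans (by simpa only [mul_one] using hχ'_le)
  have along_x₁ := sq_norm_smul_add_smul_le hχ_le (partial_le (1, 0) (by simp))
    ((-Complex.I) * fderiv ℝ u x (1, 0) + ((x.2 * b3 : ℝ) : ℂ) * u x) ((-Complex.I) * u x)
  have along_x₂ := sq_norm_smul_add_smul_le hχ_le (partial_le (0, 1) (by simp))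
    (fderiv ℝ u x (0, 1)) (u x)
  have potential : (x.1 * b2 - x.2 * b1 - τ) ^ 2 * ‖χ x • u x‖ ^ 2
      ≤ 2 * ((x.1 * b2 - x.2 * b1 - τ) ^ 2 * ‖u x‖ ^ 2) := by
    have : ‖χ x • u x‖ ≤ ‖u x‖ := by
      rw [norm_smul]
      exact mul_le_of_le_one_left (norm_nonneg _) hχ_le
    calc _ ≤ (x.1 * b2 - x.2 * b1 - τ) ^ 2 * ‖u x‖ ^ 2 := by gcongr
      _ ≤ _ := le_mul_of_one_le_left (by positivity) one_le_two
  have momentum_smul : (-Complex.I) * (χ x • fderiv ℝ u x (1, 0) + fderiv ℝ χ x (1, 0) • u x)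
        + ((x.2 * b3 : ℝ) : ℂ) * (χ x • u x)
      = χ x • ((-Complex.I) * fderiv ℝ u x (1, 0) + ((x.2 * b3 : ℝ) : ℂ) * u x)
        + fderiv ℝ χ x (1, 0) • ((-Complex.I) * u x) := by
    simp only [Complex.real_smul]
    ring
  rw [norm_mul, norm_neg, Complex.norm_I, one_mul] at along_x₁
  simp only [energyDensity2D, fderiv_fun_smul_apply hχ hu, momentum_smul]
  linarith

lemma tendsto_energyDensity2D_cutoff_smul (hu : Differentiable ℝ u) (x : ℝ × ℝ) :
    Tendsto (fun R => energyDensity2D b1 b2 b3 τ (fun y => cutoff R y • u y) x) atTop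
      (𝓝 (energyDensity2D b1 b2 b3 τ u x)) := by
  have h_val : Tendsto (fun R => cutoff R x • u x) atTop (𝓝 (u x)) := by
    simpa only [one_smul] using (tendsto_cutoff x).smul_const (u x)
  have h_deriv (v : ℝ × ℝ) :
      Tendsto (fun R => fderiv ℝ (fun y => cutoff R y • u y) x v) atTop (𝓝 (fderiv ℝ u x v)) := by
    have leibniz (R : ℝ) := fderiv_fun_smul_apply
      ((contDiff_cutoff R).differentiable (by simp) x) (hu x) v
    have h_fderiv : Tendsto (fun R => fderiv ℝ (cutoff R) x v) atTop (𝓝 0) :=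
      ((ContinuousLinearMap.apply ℝ ℝ v).continuous.tendsto _).comp (tendsto_fderiv_cutoff x)
    simpa only [leibniz, one_smul, zero_smul, add_zero] using
      ((tendsto_cutoff x).smul_const (fderiv ℝ u x v)).add (h_fderiv.smul_const (u x))
  exact (((((h_deriv (1, 0)).const_mul _).add (h_val.const_mul _)).norm.pow 2).add
    ((h_deriv (0, 1)).norm.pow 2)).add ((h_val.norm.pow 2).const_mul _)

lemma tendsto_norm2D_cutoff_smul {Ω : Set (ℝ × ℝ)} (hu : Continuous u)
    (hu_int : IntegrableOn (fun x => ‖u x‖ ^ 2) Ω) :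
    Tendsto (fun R => norm2D Ω (fun y => cutoff R y • u y)) atTop (𝓝 (norm2D Ω u)) := by
  refine tendsto_integral_filter_of_dominated_convergence (fun x => ‖u x‖ ^ 2)
    (.of_forall fun R => ?_) (.of_forall fun R => .of_forall fun x => ?_) hu_int
    (.of_forall fun x => ?_)
  · have := (contDiff_cutoff (E := ℝ × ℝ) R).continuous
    exact Continuous.aestronglyMeasurable (by fun_prop)
  · rw [norm_pow, norm_norm, norm_smul]
    gcongr
    exact mul_le_of_le_one_left (norm_nonneg _) (abs_cutoff_le_one R x)
  · simpa only [one_smul] using ((tendsto_cutoff x).smul_const (u x)).norm.pow 2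

lemma tendsto_energy2D_cutoff_smul {Ω : Set (ℝ × ℝ)} (hu : ContDiff ℝ 1 u)
    (hu_int : IntegrableOn (fun x => ‖u x‖ ^ 2) Ω)
    (hE_int : IntegrableOn (energyDensity2D b1 b2 b3 τ u) Ω) :
    Tendsto (fun R => energy2D Ω b1 b2 b3 τ (fun y => cutoff R y • u y)) atTop
      (𝓝 (energy2D Ω b1 b2 b3 τ u)) := by
  obtain ⟨C, hC⟩ := exists_norm_fderiv_cutoff_le (E := ℝ × ℝ)
  have hu_diff : Differentiable ℝ u := hu.differentiable one_ne_zero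
  refine tendsto_integral_filter_of_dominated_convergence
    (fun x => 2 * energyDensity2D b1 b2 b3 τ u x + 4 * C ^ 2 * ‖u x‖ ^ 2)
    (.of_forall fun R => ?_) ?_ ((hE_int.const_mul 2).add (hu_int.const_mul (4 * C ^ 2)))
    (.of_forall fun x => tendsto_energyDensity2D_cutoff_smul hu_diff x)
  · exact (continuous_energyDensity2D
      (((contDiff_cutoff R).of_le (by norm_cast)).smul hu)).aestronglyMeasurable
  · filter_upwards [eventually_ge_atTop 1] with R hR
    refine .of_forall fun x => ?_
    exact (Real.norm_of_nonneg (energyDensity2D_nonneg x)).trans_le <|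
      energyDensity2D_smul_le ((contDiff_cutoff R).differentiable (by simp) x) (hu_diff x)
        (abs_cutoff_le_one R x) (hC R hR x)

/-- Compactly supported functions are dense in the form domain, so a spectral lower bound tested
on them extends to every smooth function of finite energy. -/
lemma mul_norm2D_le_energy2D_of_forall_hasCompactSupport {Ω : Set (ℝ × ℝ)} {Λ : ℝ}
    (hΛ : ∀ v : ℝ × ℝ → ℂ, ContDiff ℝ (⊤ : ℕ∞) v → HasCompactSupport v →
      Λ * norm2D Ω v ≤ energy2D Ω b1 b2 b3 τ v)
    (hu : ContDiff ℝ (⊤ : ℕ∞) u) (hu_int : IntegrableOn (fun x => ‖u x‖ ^ 2) Ω)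
    (hE_int : IntegrableOn (energyDensity2D b1 b2 b3 τ u) Ω) :
    Λ * norm2D Ω u ≤ energy2D Ω b1 b2 b3 τ u := by
  refine le_of_tendsto_of_tendsto
    ((tendsto_norm2D_cutoff_smul hu.continuous hu_int).const_mul Λ)
    (tendsto_energy2D_cutoff_smul (hu.of_le (by norm_cast)) hu_int hE_int) ?_
  filter_upwards [eventually_ne_atTop 0] with R hR
  exact hΛ _ ((contDiff_cutoff R).smul hu) (hasCompactSupport_cutoff hR).smul_right

end PlanarEnergy

section WedgeProduct

lemma measurableSet_sector (α : ℝ) : MeasurableSet (sector α) :=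
  measurableSet_le (by fun_prop) (by fun_prop)

lemma measurePreserving_restrict_wedge (α : ℝ) :
    MeasurePreserving (MeasurableEquiv.prodAssoc.symm : ℝ × ℝ × ℝ ≃ᵐ (ℝ × ℝ) × ℝ)
      (volume.restrict (wedge α)) ((volume.restrict (sector α)).prod volume) := by
  have h_wedge : (MeasurableEquiv.prodAssoc.symm : ℝ × ℝ × ℝ ≃ᵐ (ℝ × ℝ) × ℝ) ⁻¹'
      (sector α ×ˢ univ) = wedge α := by
    ext x
    simp [wedge, sector, MeasurableEquiv.prodAssoc]
  have h_prod : (volume.restrict (sector α)).prod (volume : Measure ℝ)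
      = (volume : Measure ((ℝ × ℝ) × ℝ)).restrict (sector α ×ˢ univ) := by
    rw [Measure.volume_eq_prod (ℝ × ℝ) ℝ, ← Measure.prod_restrict, Measure.restrict_univ]
  rw [h_prod, ← h_wedge]
  exact (volume_preserving_prodAssoc.symm _).restrict_preimage
    ((measurableSet_sector α).prod MeasurableSet.univ)

lemma setIntegral_wedge_mul (α : ℝ) (F : ℝ × ℝ → ℝ) (k : ℝ → ℝ) :
    ∫ x in wedge α, F (x.1, x.2.1) * k x.2.2 = (∫ y in sector α, F y) * ∫ t, k t := by
  rw [← integral_prod_mul]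
  exact (measurePreserving_restrict_wedge α).integral_comp' fun z => F z.1 * k z.2

lemma integrableOn_wedge_mul {α : ℝ} {F : ℝ × ℝ → ℝ} {k : ℝ → ℝ}
    (hF : IntegrableOn F (sector α)) (hk : Integrable k) :
    IntegrableOn (fun x : ℝ × ℝ × ℝ => F (x.1, x.2.1) * k x.2.2) (wedge α) :=
  (measurePreserving_restrict_wedge α).integrable_comp_of_integrable (hF.mul_prod hk)

end WedgeProduct

section WaveExtension

/-- The wave packet `e^{-iτt} g(t)` with real envelope `g`. -/
def wavePacket (τ : ℝ) (g : ℝ → ℝ) (t : ℝ) : ℂ :=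
  Complex.exp (((-(τ * t) : ℝ) : ℂ) * Complex.I) * (g t : ℂ)

/-- The function `u(x₁,x₂) e^{-iτx₃} g(x₃)`, used to test the wedge operator against its fiber
at Fourier parameter `τ`. -/
def waveExtension (τ : ℝ) (g : ℝ → ℝ) (u : ℝ × ℝ → ℂ) (x : ℝ × ℝ × ℝ) : ℂ :=
  u (x.1, x.2.1) * wavePacket τ g x.2.2

variable {τ : ℝ} {g : ℝ → ℝ} {u : ℝ × ℝ → ℂ}

lemma contDiff_wavePacket (hg : ContDiff ℝ (⊤ : ℕ∞) g) :
    ContDiff ℝ (⊤ : ℕ∞) (wavePacket τ g) := by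
  have h_phase : ContDiff ℝ (⊤ : ℕ∞) fun t : ℝ => ((-(τ * t) : ℝ) : ℂ) :=
    Complex.ofRealCLM.contDiff.comp (contDiff_const.mul contDiff_id).neg
  exact (h_phase.mul contDiff_const).cexp.mul (Complex.ofRealCLM.contDiff.comp hg)

lemma contDiff_waveExtension (hu : ContDiff ℝ (⊤ : ℕ∞) u) (hg : ContDiff ℝ (⊤ : ℕ∞) g) :
    ContDiff ℝ (⊤ : ℕ∞) (waveExtension τ g u) :=
  (hu.comp (contDiff_fst.prodMk (contDiff_fst.comp contDiff_snd))).mul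
    ((contDiff_wavePacket hg).comp (contDiff_snd.comp contDiff_snd))

lemma hasCompactSupport_waveExtension (hu : HasCompactSupport u) (hg : HasCompactSupport g) :
    HasCompactSupport (waveExtension τ g u) := by
  have h_image : IsCompact (Homeomorph.prodAssoc ℝ ℝ ℝ '' (tsupport u ×ˢ tsupport g)) :=
    (hu.isCompact.prod hg.isCompact).image (Homeomorph.prodAssoc ℝ ℝ ℝ).continuous
  refine HasCompactSupport.intro h_image fun x hx => ?_
  by_cases hxu : (x.1, x.2.1) ∈ tsupport u
  · have hxg : x.2.2 ∉ tsupport g := fun hxg => hx ⟨((x.1, x.2.1), x.2.2), ⟨hxu, hxg⟩, rfl⟩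
    rw [waveExtension, wavePacket, image_eq_zero_of_notMem_tsupport hxg, Complex.ofReal_zero,
      mul_zero, mul_zero]
  · rw [waveExtension, image_eq_zero_of_notMem_tsupport hxu, zero_mul]

lemma norm_wavePacket (t : ℝ) : ‖wavePacket τ g t‖ = |g t| := by
  rw [wavePacket, norm_mul, Complex.norm_exp_ofReal_mul_I, one_mul, Complex.norm_real,
    Real.norm_eq_abs]

lemma sq_norm_waveExtension (x : ℝ × ℝ × ℝ) :
    ‖waveExtension τ g u x‖ ^ 2 = ‖u (x.1, x.2.1)‖ ^ 2 * g x.2.2 ^ 2 := by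
  rw [waveExtension, norm_mul, norm_wavePacket, mul_pow, sq_abs]

lemma hasDerivAt_wavePacket {t : ℝ} (hg : DifferentiableAt ℝ g t) :
    HasDerivAt (wavePacket τ g) (Complex.exp (((-(τ * t) : ℝ) : ℂ) * Complex.I)
      * (((deriv g t : ℝ) : ℂ) - ((τ * g t : ℝ) : ℂ) * Complex.I)) t := by
  have h_phase : HasDerivAt (fun s : ℝ => ((-(τ * s) : ℝ) : ℂ)) ((-(τ * 1) : ℝ) : ℂ) t :=
    ((hasDerivAt_id t).const_mul τ).neg.ofReal_comp
  refine ((h_phase.mul_const Complex.I).cexp.mul hg.hasDerivAt.ofReal_comp).congr_deriv ?_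
  push_cast
  ring

lemma fderiv_waveExtension_apply {x : ℝ × ℝ × ℝ} (hu : DifferentiableAt ℝ u (x.1, x.2.1))
    (hg : DifferentiableAt ℝ g x.2.2) (w : ℝ × ℝ × ℝ) :
    fderiv ℝ (waveExtension τ g u) x w
      = fderiv ℝ u (x.1, x.2.1) (w.1, w.2.1) * wavePacket τ g x.2.2
        + u (x.1, x.2.1) * (w.2.2 * deriv (wavePacket τ g) x.2.2) := by
  have h_planar : HasFDerivAt (fun y : ℝ × ℝ × ℝ => u (y.1, y.2.1)) _ x :=
    hu.hasFDerivAt.comp x (hasFDerivAt_fst.prodMk (hasFDerivAt_fst.comp x hasFDerivAt_snd))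
  have h_coord : HasFDerivAt (fun y : ℝ × ℝ × ℝ => y.2.2) _ x :=
    ((ContinuousLinearMap.snd ℝ ℝ ℝ).comp (ContinuousLinearMap.snd ℝ ℝ (ℝ × ℝ))).hasFDerivAt
  have h_axial : HasFDerivAt (fun y : ℝ × ℝ × ℝ => wavePacket τ g y.2.2) _ x :=
    HasFDerivAt.comp (g := wavePacket τ g) x
      (hasDerivAt_wavePacket hg).differentiableAt.hasDerivAt.hasFDerivAt h_coord
  have h_mul : HasFDerivAt (waveExtension τ g u) _ x := h_planar.mul h_axial
  rw [h_mul.fderiv]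
  simp only [add_apply, smul_apply, ContinuousLinearMap.comp_apply, ContinuousLinearMap.prod_apply,
    ContinuousLinearMap.coe_fst', ContinuousLinearMap.coe_snd',
    ContinuousLinearMap.toSpanSingleton_apply, Complex.real_smul, smul_eq_mul]
  ring

/-- The phase `e^{-iτx₃}` shifts the electric potential by `τ`; being out of phase with it, the
derivative of the envelope contributes separately. -/
lemma energyDensity3D_waveExtension (b1 b2 b3 : ℝ) {x : ℝ × ℝ × ℝ}
    (hu : DifferentiableAt ℝ u (x.1, x.2.1)) (hg : DifferentiableAt ℝ g x.2.2) :
    ‖(-Complex.I) * fderiv ℝ (waveExtension τ g u) x (1, 0, 0)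
        + ((x.2.1 * b3 : ℝ) : ℂ) * waveExtension τ g u x‖ ^ 2
      + ‖fderiv ℝ (waveExtension τ g u) x (0, 1, 0)‖ ^ 2
      + ‖(-Complex.I) * fderiv ℝ (waveExtension τ g u) x (0, 0, 1)
          - ((x.2.1 * b1 : ℝ) : ℂ) * waveExtension τ g u x
          + ((x.1 * b2 : ℝ) : ℂ) * waveExtension τ g u x‖ ^ 2
    = energyDensity2D b1 b2 b3 τ u (x.1, x.2.1) * g x.2.2 ^ 2
      + ‖u (x.1, x.2.1)‖ ^ 2 * deriv g x.2.2 ^ 2 := by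
  set y := (x.1, x.2.1)
  set t := x.2.2
  have along_x₁ : (-Complex.I) * fderiv ℝ (waveExtension τ g u) x (1, 0, 0)
        + ((x.2.1 * b3 : ℝ) : ℂ) * waveExtension τ g u x
      = ((-Complex.I) * fderiv ℝ u y (1, 0) + ((x.2.1 * b3 : ℝ) : ℂ) * u y)
        * wavePacket τ g t := by
    rw [fderiv_waveExtension_apply hu hg, waveExtension]
    push_cast
    ring
  have along_x₂ : fderiv ℝ (waveExtension τ g u) x (0, 1, 0)
      = fderiv ℝ u y (0, 1) * wavePacket τ g t := by
    rw [fderiv_waveExtension_apply hu hg]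
    push_cast
    ring
  have along_x₃ : (-Complex.I) * fderiv ℝ (waveExtension τ g u) x (0, 0, 1)
        - ((x.2.1 * b1 : ℝ) : ℂ) * waveExtension τ g u x
        + ((x.1 * b2 : ℝ) : ℂ) * waveExtension τ g u x
      = u y * (Complex.exp (((-(τ * t) : ℝ) : ℂ) * Complex.I)
        * ((((x.1 * b2 - x.2.1 * b1 - τ) * g t : ℝ) : ℂ)
          + ((-deriv g t : ℝ) : ℂ) * Complex.I)) := by
    rw [fderiv_waveExtension_apply hu hg, (hasDerivAt_wavePacket hg).deriv, waveExtension,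
      wavePacket, Prod.mk_zero_zero, map_zero]
    push_cast
    linear_combination (u y * Complex.exp (-(τ * t) * Complex.I) * τ * g t) * Complex.I_mul_I
  rw [along_x₁, along_x₂, along_x₃]
  simp only [norm_mul, mul_pow, norm_wavePacket, sq_abs, Complex.norm_exp_ofReal_mul_I,
    one_mul, Complex.sq_norm (_ + _ * Complex.I), Complex.normSq_add_mul_I, energyDensity2D]
  ring

lemma norm3D_waveExtension (α : ℝ) :
    norm3D (wedge α) (waveExtension τ g u) = norm2D (sector α) u * ∫ t, g t ^ 2 := by
  rw [norm3D, norm2D, ← setIntegral_wedge_mul]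
  simp only [sq_norm_waveExtension]

lemma energy3D_waveExtension (α b1 b2 b3 : ℝ) (hu : ContDiff ℝ 1 u) (hu_supp : HasCompactSupport u)
    (hg : ContDiff ℝ 1 g) (hg_supp : HasCompactSupport g) :
    energy3D (wedge α) b1 b2 b3 (waveExtension τ g u)
      = energy2D (sector α) b1 b2 b3 τ u * (∫ t, g t ^ 2)
        + norm2D (sector α) u * ∫ t, deriv g t ^ 2 := by
  have hg_int : Integrable fun t => g t ^ 2 :=
    (hg.continuous.memLp_of_hasCompactSupport hg_supp).integrable_sq
  have hg'_int : Integrable fun t => deriv g t ^ 2 :=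
    ((hg.continuous_deriv le_rfl).memLp_of_hasCompactSupport hg_supp.deriv).integrable_sq
  have hu_int : Integrable fun x => ‖u x‖ ^ 2 :=
    (hu.continuous.memLp_of_hasCompactSupport hu_supp).norm.integrable_sq
  have hE_int : Integrable (energyDensity2D b1 b2 b3 τ u) :=
    (continuous_energyDensity2D hu).integrable_of_hasCompactSupport
      (hasCompactSupport_energyDensity2D hu_supp)
  rw [energy3D, energy2D_eq_setIntegral, norm2D, ← setIntegral_wedge_mul, ← setIntegral_wedge_mul,
    ← integral_add (integrableOn_wedge_mul hE_int.integrableOn hg_int)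
      (integrableOn_wedge_mul hu_int.integrableOn hg'_int)]
  congr 1 with x
  exact energyDensity3D_waveExtension b1 b2 b3 (hu.differentiable one_ne_zero _)
    (hg.differentiable one_ne_zero _)

end WaveExtension

lemma lambdaWedge_mul_norm3D_le_energy3D {α b1 b2 b3 : ℝ} {u : ℝ × ℝ × ℝ → ℂ}
    (hu : ContDiff ℝ (⊤ : ℕ∞) u) (hu_supp : HasCompactSupport u)
    (hu_pos : 0 < norm3D (wedge α) u) :
    lambdaWedge α b1 b2 b3 * norm3D (wedge α) u ≤ energy3D (wedge α) b1 b2 b3 u := by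
  refine (le_div_iff₀ hu_pos).1 (csInf_le ⟨0, ?_⟩ ⟨u, hu, hu_supp, hu_pos, rfl⟩)
  rintro _ ⟨v, -, -, hv_pos, rfl⟩
  exact div_nonneg (integral_nonneg fun x => by positivity) hv_pos.le

/-- Multiplying `u` by a slowly varying wave packet along the edge bounds `λ(B;W_α)` by the
band function `s(B;α,τ)`. -/
lemma lambdaWedge_mul_norm2D_le_energy2D {α b1 b2 b3 τ : ℝ} {u : ℝ × ℝ → ℂ}
    (hu : ContDiff ℝ (⊤ : ℕ∞) u) (hu_supp : HasCompactSupport u) :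
    lambdaWedge α b1 b2 b3 * norm2D (sector α) u ≤ energy2D (sector α) b1 b2 b3 τ u := by
  set N := norm2D (sector α) u
  set Q := energy2D (sector α) b1 b2 b3 τ u
  have hQ : 0 ≤ Q := integral_nonneg energyDensity2D_nonneg
  have hN : 0 ≤ N := integral_nonneg fun x => sq_nonneg _
  rcases hN.eq_or_lt with hN_zero | hN_pos
  · rwa [← hN_zero, mul_zero]
  have h_ratio : lambdaWedge α b1 b2 b3 ≤ Q / N := by
    refine le_of_forall_pos_le_add fun ε hε => ?_
    obtain ⟨g, hg, hg_supp, hg_pos, hg_deriv⟩ := exists_integral_deriv_sq_le hε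
    set A := ∫ t, g t ^ 2
    have h_norm : norm3D (wedge α) (waveExtension τ g u) = N * A := norm3D_waveExtension α
    have h_test := lambdaWedge_mul_norm3D_le_energy3D (α := α) (b1 := b1) (b2 := b2) (b3 := b3)
      (contDiff_waveExtension (τ := τ) hu hg) (hasCompactSupport_waveExtension hu_supp hg_supp)
      (h_norm ▸ mul_pos hN_pos hg_pos)
    rw [h_norm, energy3D_waveExtension α b1 b2 b3 (hu.of_le (by norm_cast)) hu_supp
      (hg.of_le (by norm_cast)) hg_supp] at h_test
    refine le_of_mul_le_mul_right ?_ (mul_pos hN_pos hg_pos)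
    calc lambdaWedge α b1 b2 b3 * (N * A) ≤ Q * A + N * ∫ t, deriv g t ^ 2 := h_test
      _ ≤ Q * A + N * (ε * A) := by gcongr
      _ = (Q / N + ε) * (N * A) := by field_simp
  exact (le_div_iff₀ hN_pos).1 h_ratio

section GaussianMoments

lemma polar_mem_sector_iff {α r θ : ℝ} (hα : α ∈ Ioo 0 π) (hr : 0 < r) (hθ : θ ∈ Ioo (-π) π) :
    (r * cos θ, r * sin θ) ∈ sector α ↔ θ ∈ Icc (-(α / 2)) (α / 2) := by
  obtain ⟨hα_pos, hα_lt⟩ := hα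
  obtain ⟨hθ_gt, hθ_lt⟩ := hθ
  have hcos : 0 < cos (α / 2) := cos_pos_of_mem_Ioo ⟨by linarith, by linarith⟩
  have sin_nonneg_iff : (r * cos θ, r * sin θ) ∈ sector α
      ↔ 0 ≤ sin (α / 2 + θ) ∧ 0 ≤ sin (α / 2 - θ) := by
    have h_tan : r * cos θ * tan (α / 2) = r * (cos θ * sin (α / 2) / cos (α / 2)) := by
      rw [tan_eq_sin_div_cos]
      ring
    rw [sector, mem_ofPred_eq, abs_le, h_tan, neg_le, ← mul_neg, mul_le_mul_iff_right₀ hr,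
      mul_le_mul_iff_right₀ hr, le_div_iff₀ hcos, le_div_iff₀ hcos, sin_add, sin_sub]
    constructor <;> rintro ⟨h_low, h_up⟩ <;> constructor <;> linarith
  rw [sin_nonneg_iff]
  constructor
  · rintro ⟨h_low, h_up⟩
    constructor
    · by_contra! h
      exact h_low.not_gt (sin_neg_of_neg_of_neg_pi_lt (by linarith) (by linarith))
    · by_contra! h
      exact h_up.not_gt (sin_neg_of_neg_of_neg_pi_lt (by linarith) (by linarith))
  · rintro ⟨h_low, h_up⟩
    exact ⟨sin_nonneg_of_nonneg_of_le_pi (by linarith) (by linarith),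
      sin_nonneg_of_nonneg_of_le_pi (by linarith) (by linarith)⟩

lemma setIntegral_sector_eq_mul_of_polar {α : ℝ} (hα : α ∈ Ioo 0 π) {f : ℝ × ℝ → ℝ}
    {ρ h : ℝ → ℝ} (hf : ∀ r θ, r * f (r * cos θ, r * sin θ) = ρ r * h θ) :
    ∫ x in sector α, f x = (∫ r in Ioi 0, ρ r) * ∫ θ in (-(α / 2))..(α / 2), h θ := by
  set polarSector : Set (ℝ × ℝ) := Ioi 0 ×ˢ Icc (-(α / 2)) (α / 2)
  have h_meas : MeasurableSet polarSector := measurableSet_Ioi.prod measurableSet_Icc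
  have h_subset : polarSector ⊆ polarCoord.target := by
    rintro ⟨r, θ⟩ ⟨hr, hθ_low, hθ_up⟩
    dsimp only at hθ_low hθ_up
    exact ⟨hr, by dsimp only; linarith [hα.2], by dsimp only; linarith [hα.2]⟩
  have h_inside : ∀ z ∈ polarSector,
      z.1 • (sector α).indicator f (polarCoord.symm z) = ρ z.1 * h z.2 := by
    rintro ⟨r, θ⟩ hz
    have h_mem : (r * cos θ, r * sin θ) ∈ sector α :=
      (polar_mem_sector_iff hα (h_subset hz).1 (h_subset hz).2).2 hz.2
    rw [polarCoord_symm_apply, indicator_of_mem h_mem, smul_eq_mul, hf]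
  have h_outside : ∀ z ∈ polarCoord.target \ polarSector,
      z.1 • (sector α).indicator f (polarCoord.symm z) = 0 := by
    rintro ⟨r, θ⟩ ⟨hz, hz_notMem⟩
    have h_notMem : (r * cos θ, r * sin θ) ∉ sector α := fun h_mem =>
      hz_notMem ⟨hz.1, (polar_mem_sector_iff hα hz.1 hz.2).1 h_mem⟩
    rw [polarCoord_symm_apply, indicator_of_notMem h_notMem, smul_zero]
  calc ∫ x in sector α, f x
      = ∫ z in polarCoord.target, z.1 • (sector α).indicator f (polarCoord.symm z) := by
        rw [integral_comp_polarCoord_symm, integral_indicator (measurableSet_sector α)]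
    _ = ∫ z in polarSector, z.1 • (sector α).indicator f (polarCoord.symm z) :=
        setIntegral_eq_of_subset_of_forall_sdiff_eq_zero
          polarCoord.open_target.measurableSet h_subset h_outside
    _ = ∫ z in polarSector, ρ z.1 * h z.2 := setIntegral_congr_fun h_meas h_inside
    _ = (∫ r in Ioi 0, ρ r) * ∫ θ in (-(α / 2))..(α / 2), h θ := by
        rw [intervalIntegral.integral_of_le (by linarith [hα.1]),
          ← integral_Icc_eq_integral_Ioc, ← setIntegral_prod_mul, ← Measure.volume_eq_prod]

lemma integral_Ioi_odd_pow_mul_exp_neg_mul_sq {b : ℝ} (hb : 0 < b) (n : ℕ) :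
    ∫ r in Ioi (0 : ℝ), r ^ (2 * n + 1) * exp (-b * r ^ 2) = n.factorial / (2 * b ^ (n + 1)) := by
  have hq : (-1 : ℝ) < (2 * n + 1 : ℕ) := neg_one_lt_zero.trans_le (Nat.cast_nonneg _)
  have h := integral_rpow_mul_exp_neg_mul_rpow two_pos hq hb
  have h_half : (((2 * n + 1 : ℕ) : ℝ) + 1) / 2 = ((n + 1 : ℕ) : ℝ) := by
    push_cast
    ring
  have h_gamma : Gamma ((n + 1 : ℕ) : ℝ) = n.factorial := by
    rw [Nat.cast_add_one, Gamma_nat_eq_factorial]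
  simp only [neg_div, h_half, h_gamma, rpow_neg hb.le, rpow_natCast, rpow_two] at h
  rw [h]
  field_simp

lemma integral_quadratic_cos_sin (α A B C : ℝ) :
    ∫ θ in (-(α / 2))..(α / 2), (A * cos θ ^ 2 + B * sin θ ^ 2 + C * (sin θ * cos θ))
      = (A * (α + sin α) + B * (α - sin α)) / 2 := by
  have h_sin : sin α = 2 * sin (α / 2) * cos (α / 2) := by
    rw [← sin_two_mul, mul_div_cancel₀ α two_ne_zero]
  have h_int {f : ℝ → ℝ} (hf : Continuous f) : IntervalIntegrable f volume (-(α / 2)) (α / 2) :=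
    hf.intervalIntegrable _ _
  rw [intervalIntegral.integral_add (h_int (by fun_prop)) (h_int (by fun_prop)),
    intervalIntegral.integral_add (h_int (by fun_prop)) (h_int (by fun_prop)),
    intervalIntegral.integral_const_mul, intervalIntegral.integral_const_mul,
    intervalIntegral.integral_const_mul, integral_cos_sq, integral_sin_sq,
    integral_sin_mul_cos₁, h_sin, sin_neg, cos_neg]
  ring

lemma setIntegral_sector_gaussian {α b : ℝ} (hα : α ∈ Ioo 0 π) (hb : 0 < b) :
    ∫ x in sector α, exp (-b * (x.1 ^ 2 + x.2 ^ 2)) = α / (2 * b) := by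
  have h_polar (r θ : ℝ) : r * exp (-b * ((r * cos θ) ^ 2 + (r * sin θ) ^ 2))
      = r * exp (-b * r ^ 2) * 1 := by
    rw [mul_pow, mul_pow, ← mul_add, cos_sq_add_sin_sq, mul_one, mul_one]
  have h_radial : ∫ r in Ioi (0 : ℝ), r * exp (-b * r ^ 2) = 1 / (2 * b) := by
    simpa using integral_Ioi_odd_pow_mul_exp_neg_mul_sq hb 0
  rw [setIntegral_sector_eq_mul_of_polar hα h_polar, h_radial,
    intervalIntegral.integral_const, smul_eq_mul]
  ring

lemma setIntegral_sector_quadratic_mul_gaussian {α b : ℝ} (hα : α ∈ Ioo 0 π) (hb : 0 < b)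
    (A B C : ℝ) :
    ∫ x in sector α, (A * x.1 ^ 2 + B * x.2 ^ 2 + C * (x.1 * x.2))
        * exp (-b * (x.1 ^ 2 + x.2 ^ 2))
      = (A * (α + sin α) + B * (α - sin α)) / (4 * b ^ 2) := by
  have h_polar (r θ : ℝ) :
      r * ((A * (r * cos θ) ^ 2 + B * (r * sin θ) ^ 2 + C * (r * cos θ * (r * sin θ)))
        * exp (-b * ((r * cos θ) ^ 2 + (r * sin θ) ^ 2)))
      = r ^ 3 * exp (-b * r ^ 2)
        * (A * cos θ ^ 2 + B * sin θ ^ 2 + C * (sin θ * cos θ)) := by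
    rw [mul_pow, mul_pow, ← mul_add (r ^ 2), cos_sq_add_sin_sq, mul_one]
    ring
  have h_radial : ∫ r in Ioi (0 : ℝ), r ^ 3 * exp (-b * r ^ 2) = 1 / (2 * b ^ 2) := by
    simpa using integral_Ioi_odd_pow_mul_exp_neg_mul_sq hb 1
  rw [setIntegral_sector_eq_mul_of_polar hα h_polar, h_radial,
    integral_quadratic_cos_sin]
  field_simp
  ring

lemma integrable_monomial_mul_gaussian {b : ℝ} (hb : 0 < b) (m n : ℕ) :
    Integrable fun x : ℝ × ℝ => x.1 ^ m * x.2 ^ n * exp (-b * (x.1 ^ 2 + x.2 ^ 2)) := by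
  have h_factor (k : ℕ) : Integrable fun t : ℝ => t ^ k * exp (-b * t ^ 2) := by
    simpa only [rpow_natCast] using integrable_rpow_mul_exp_neg_mul_sq hb (s := (k : ℝ))
      (neg_one_lt_zero.trans_le k.cast_nonneg)
  refine ((h_factor m).mul_prod (h_factor n)).congr (.of_forall fun x => ?_)
  dsimp only
  rw [mul_add, exp_add]
  ring

lemma integrable_gaussian {b : ℝ} (hb : 0 < b) :
    Integrable fun x : ℝ × ℝ => exp (-b * (x.1 ^ 2 + x.2 ^ 2)) := by
  simpa only [pow_zero, one_mul] using integrable_monomial_mul_gaussian hb 0 0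

lemma integrable_quadratic_mul_gaussian {b : ℝ} (hb : 0 < b) (A B C : ℝ) :
    Integrable fun x : ℝ × ℝ => (A * x.1 ^ 2 + B * x.2 ^ 2 + C * (x.1 * x.2))
      * exp (-b * (x.1 ^ 2 + x.2 ^ 2)) := by
  refine ((((integrable_monomial_mul_gaussian hb 2 0).const_mul A).add
    ((integrable_monomial_mul_gaussian hb 0 2).const_mul B)).add
    ((integrable_monomial_mul_gaussian hb 1 1).const_mul C)).congr (.of_forall fun x => ?_)
  simp only [Pi.add_apply]
  ring

end GaussianMoments

section GaussianTrial

/-- The complex Gaussian `e^{-c(x₁²+x₂²) + i a x₁x₂}`; the phase `a x₁x₂` selects the gauge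
adapted to the sector. -/
def gaussianTrial (a c : ℝ) (x : ℝ × ℝ) : ℂ :=
  Complex.exp (((-(c * (x.1 ^ 2 + x.2 ^ 2)) : ℝ) : ℂ) + ((a * (x.1 * x.2) : ℝ) : ℂ) * Complex.I)

variable {a c : ℝ}

lemma contDiff_gaussianTrial : ContDiff ℝ (⊤ : ℕ∞) (gaussianTrial a c) := by
  have h_re : ContDiff ℝ (⊤ : ℕ∞) fun x : ℝ × ℝ => -(c * (x.1 ^ 2 + x.2 ^ 2)) := by fun_prop
  have h_im : ContDiff ℝ (⊤ : ℕ∞) fun x : ℝ × ℝ => a * (x.1 * x.2) := by fun_prop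
  exact ((Complex.ofRealCLM.contDiff.comp h_re).add
    ((Complex.ofRealCLM.contDiff.comp h_im).mul contDiff_const)).cexp

lemma sq_norm_gaussianTrial (x : ℝ × ℝ) :
    ‖gaussianTrial a c x‖ ^ 2 = exp (-(2 * c) * (x.1 ^ 2 + x.2 ^ 2)) := by
  rw [gaussianTrial, Complex.exp_add, norm_mul, Complex.norm_exp_ofReal_mul_I, mul_one,
    Complex.norm_exp_ofReal, ← exp_nat_mul]
  congr 1
  push_cast
  ring

lemma fderiv_gaussianTrial_apply (x v : ℝ × ℝ) :
    fderiv ℝ (gaussianTrial a c) x v = gaussianTrial a c x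
      * (((-(2 * c) * (x.1 * v.1 + x.2 * v.2) : ℝ) : ℂ)
        + ((a * (x.1 * v.2 + x.2 * v.1) : ℝ) : ℂ) * Complex.I) := by
  have h_fst : HasFDerivAt Prod.fst (.fst ℝ ℝ ℝ) x := hasFDerivAt_fst
  have h_snd : HasFDerivAt Prod.snd (.snd ℝ ℝ ℝ) x := hasFDerivAt_snd
  have h_re := (((h_fst.pow 2).add (h_snd.pow 2)).const_mul c).neg
  have h_im := (h_fst.mul h_snd).const_mul a
  have h_exp : HasFDerivAt (gaussianTrial a c) _ x :=
    ((Complex.ofRealCLM.hasFDerivAt.comp x h_re).add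
      ((Complex.ofRealCLM.hasFDerivAt.comp x h_im).mul_const Complex.I)).cexp
  rw [h_exp.fderiv]
  simp only [gaussianTrial, add_apply, neg_apply, smul_apply, ContinuousLinearMap.comp_apply,
    ContinuousLinearMap.coe_fst', ContinuousLinearMap.coe_snd', Function.comp_apply,
    Complex.ofRealCLM_apply, smul_eq_mul, nsmul_eq_mul, Pi.add_apply,
    Pi.neg_apply, Pi.mul_apply]
  push_cast
  ring

lemma energyDensity2D_gaussianTrial (b1 b2 b3 : ℝ) (x : ℝ × ℝ) :
    energyDensity2D b1 b2 b3 0 (gaussianTrial a c) x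
      = ((4 * c ^ 2 + a ^ 2 + b2 ^ 2) * x.1 ^ 2 + (4 * c ^ 2 + (a + b3) ^ 2 + b1 ^ 2) * x.2 ^ 2
          + -(2 * b1 * b2) * (x.1 * x.2)) * exp (-(2 * c) * (x.1 ^ 2 + x.2 ^ 2)) := by
  have along_x₁ : (-Complex.I) * fderiv ℝ (gaussianTrial a c) x (1, 0)
        + ((x.2 * b3 : ℝ) : ℂ) * gaussianTrial a c x
      = gaussianTrial a c x
        * ((((a + b3) * x.2 : ℝ) : ℂ) + ((2 * c * x.1 : ℝ) : ℂ) * Complex.I) := by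
    rw [fderiv_gaussianTrial_apply]
    push_cast
    linear_combination (-gaussianTrial a c x * a * x.2) * Complex.I_mul_I
  rw [energyDensity2D, along_x₁, fderiv_gaussianTrial_apply]
  simp only [norm_mul, mul_pow, Complex.sq_norm (_ + _ * Complex.I), Complex.normSq_add_mul_I,
    sq_norm_gaussianTrial]
  ring

lemma norm2D_sector_gaussianTrial {α : ℝ} (hα : α ∈ Ioo 0 π) (hc : 0 < c) :
    norm2D (sector α) (gaussianTrial a c) = α / (4 * c) := by
  simp only [norm2D, sq_norm_gaussianTrial]
  rw [setIntegral_sector_gaussian hα (mul_pos two_pos hc)]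
  ring

lemma energy2D_sector_gaussianTrial {α : ℝ} (hα : α ∈ Ioo 0 π) (hc : 0 < c) (b1 b2 b3 : ℝ) :
    energy2D (sector α) b1 b2 b3 0 (gaussianTrial a c)
      = ((4 * c ^ 2 + a ^ 2 + b2 ^ 2) * (α + sin α)
        + (4 * c ^ 2 + (a + b3) ^ 2 + b1 ^ 2) * (α - sin α)) / (16 * c ^ 2) := by
  simp only [energy2D_eq_setIntegral, energyDensity2D_gaussianTrial]
  rw [setIntegral_sector_quadratic_mul_gaussian hα (mul_pos two_pos hc)]
  ring

lemma lambdaWedge_mul_norm2D_gaussianTrial_le {α : ℝ} (hc : 0 < c) (b1 b2 b3 : ℝ) :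
    lambdaWedge α b1 b2 b3 * norm2D (sector α) (gaussianTrial a c)
      ≤ energy2D (sector α) b1 b2 b3 0 (gaussianTrial a c) := by
  refine mul_norm2D_le_energy2D_of_forall_hasCompactSupport
    (fun v hv hv_supp => lambdaWedge_mul_norm2D_le_energy2D hv hv_supp) contDiff_gaussianTrial
    (Integrable.integrableOn ?_) (Integrable.integrableOn ?_)
  · simpa only [sq_norm_gaussianTrial] using integrable_gaussian (mul_pos two_pos hc)
  · have h_eq := funext (energyDensity2D_gaussianTrial (a := a) (c := c) b1 b2 b3)
    exact h_eq ▸ integrable_quadratic_mul_gaussian (mul_pos two_pos hc) _ _ _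

/-- The choice `a = -b₃ (α - sin α) / (2 α)` minimises the energy of `gaussianTrial`. -/
lemma lambdaWedge_le_of_pos {α : ℝ} (hα : α ∈ Ioo 0 π) (hc : 0 < c) (b1 b2 b3 : ℝ) :
    lambdaWedge α b1 b2 b3 ≤ 2 * c + (b3 ^ 2 * (α ^ 2 - sin α ^ 2) / (2 * α)
      + b1 ^ 2 * (α - sin α) + b2 ^ 2 * (α + sin α)) / (4 * c * α) := by
  have hα_pos : 0 < α := hα.1
  have h_test := lambdaWedge_mul_norm2D_gaussianTrial_le (α := α)
    (a := -(b3 * (α - sin α) / (2 * α))) hc b1 b2 b3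
  rw [norm2D_sector_gaussianTrial hα hc, energy2D_sector_gaussianTrial hα hc,
    ← le_div_iff₀ (by positivity)] at h_test
  refine h_test.trans_eq ?_
  field_simp
  ring

end GaussianTrial

lemma sq_sub_sin_sq_le {α : ℝ} (hα : 0 ≤ α) : α ^ 2 - sin α ^ 2 ≤ α ^ 4 / 3 := by
  have h_sub : α - sin α ≤ α ^ 3 / 6 := by linarith [sin_ge_sub_cube hα]
  calc α ^ 2 - sin α ^ 2 = (α - sin α) * (α + sin α) := by ring
    _ ≤ α ^ 3 / 6 * (2 * α) :=
        mul_le_mul_of_nonneg h_sub (by linarith [sin_le hα])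
          (by linarith [sin_le hα]) (by linarith)
    _ = α ^ 4 / 3 := by ring

lemma sub_sin_mul_cos_le {α : ℝ} (hα : 0 ≤ α) : α - sin α * cos α ≤ 2 * α ^ 3 / 3 := by
  have h_double := sin_ge_sub_cube (mul_nonneg two_pos.le hα)
  rw [sin_two_mul] at h_double
  linarith

lemma cos_sq_half_mul_sub_sin_add_sin_sq_half_mul_add_sin (α : ℝ) :
    cos (α / 2) ^ 2 * (α - sin α) + sin (α / 2) ^ 2 * (α + sin α) = α - sin α * cos α := by
  have h_cos : cos α = 2 * cos (α / 2) ^ 2 - 1 := by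
    rw [← cos_two_mul, mul_div_cancel₀ α two_ne_zero]
  rw [h_cos, sin_sq]
  ring

lemma lambdaWedge_tangent_le {α c : ℝ} (hα : α ∈ Ioo 0 π) (hc : 0 < c) (γ : ℝ) :
    lambdaWedge α (sin γ * cos (α / 2)) (sin γ * sin (α / 2)) (cos γ)
      ≤ 2 * c + α ^ 2 * (1 + 3 * sin γ ^ 2) / (24 * c) := by
  have hα_pos : 0 < α := hα.1
  have h_num : cos γ ^ 2 * (α ^ 2 - sin α ^ 2) / (2 * α)
      + (sin γ * cos (α / 2)) ^ 2 * (α - sin α) + (sin γ * sin (α / 2)) ^ 2 * (α + sin α)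
      ≤ α ^ 3 * (1 + 3 * sin γ ^ 2) / 6 := by
    calc _ = cos γ ^ 2 * (α ^ 2 - sin α ^ 2) / (2 * α) + sin γ ^ 2 * (α - sin α * cos α) := by
          rw [← cos_sq_half_mul_sub_sin_add_sin_sq_half_mul_add_sin]
          ring
      _ ≤ cos γ ^ 2 * (α ^ 4 / 3) / (2 * α) + sin γ ^ 2 * (2 * α ^ 3 / 3) := by
          gcongr
          exacts [sq_sub_sin_sq_le hα_pos.le, sub_sin_mul_cos_le hα_pos.le]
      _ = α ^ 3 * (1 + 3 * sin γ ^ 2) / 6 := by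
          rw [cos_sq']
          field_simp
          ring
  calc _ ≤ _ := lambdaWedge_le_of_pos hα hc _ _ _
    _ ≤ 2 * c + α ^ 3 * (1 + 3 * sin γ ^ 2) / 6 / (4 * c * α) := by gcongr
    _ = 2 * c + α ^ 2 * (1 + 3 * sin γ ^ 2) / (24 * c) := by
        field_simp
        ring

end MagWedge

open MagWedge in
theorem lambdaWedge_rough_upper_bound_general (α γ : ℝ) (hα : α ∈ Set.Ioo 0 π) :
    lambdaWedge α (Real.sin γ * Real.cos (α / 2)) (Real.sin γ * Real.sin (α / 2)) (Real.cos γ)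
      ≤ α * (1 / Real.sqrt 3 + Real.sqrt 3 / 2 * Real.sin γ ^ 2) := by
  have hα_pos : 0 < α := hα.1
  have h_sqrt : Real.sqrt 3 ^ 2 = 3 := Real.sq_sqrt (by norm_num)
  -- This `c` is the optimal one at `γ = 0`.
  have h_test := lambdaWedge_tangent_le (c := α / (4 * Real.sqrt 3)) hα (by positivity) γ
  refine h_test.trans_eq ?_
  field_simp
  rw [h_sqrt]
  ring

open MagWedge in
/-- rough upper bound `λ(B;W_α) ≤ α(1/√3 + (√3/2)sin²γ)`. -/
theorem lambdaWedge_rough_upper_bound (α γ : ℝ) (hα : α ∈ Set.Ioo 0 π)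
    (hγ : γ ∈ Set.Icc 0 (π / 2)) :
    lambdaWedge α (Real.sin γ * Real.cos (α / 2)) (Real.sin γ * Real.sin (α / 2)) (Real.cos γ)
      ≤ α * (1 / Real.sqrt 3 + Real.sqrt 3 / 2 * Real.sin γ ^ 2) :=
  lambdaWedge_rough_upper_bound_general α γ hα
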